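/- Let (F_0, a) be initial data for the completion problem in ℂ^d with k ≥ d, let f : [0,∞) → [0,∞) be strictly convex, and let F = (F_0, G) ∈ C_a(F_0) be a global minimizer of P_f on C_a(F_0), with associated data λ = λ↑(S_0), μ = λ(S_G), s_F, constants c_1 > … > c_p > 0, and sets K_1,…,K_p, and suppose p > 1. Then for every i ∈ K_1 and every j ∈ K_r with r ≥ 2 one has i < j; moreover, each set K_j consists of consecutive indices and K_1 < K_2 < … < K_p (i.e., every element of K_i is smaller than every element of K_j whenever i < j). -/

import Mathlib

open Finset
open scoped ComplexOrder

noncomputable def sortAsc {m : ℕ} (x : Fin m → ℝ) : Fin m → ℝ :=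
  x ∘ Tuple.sort x

noncomputable def sortDesc {m : ℕ} (x : Fin m → ℝ) : Fin m → ℝ :=
  fun i => (x ∘ Tuple.sort x) i.rev

noncomputable def pad {k : ℕ} (x : Fin k → ℝ) (m : ℕ) : Fin m → ℝ :=
  fun i => if h : (i : ℕ) < k then x ⟨i, h⟩ else 0

/-- `MajorizedBy x y` means `x ≺ y`. -/
def MajorizedBy {m : ℕ} (x y : Fin m → ℝ) : Prop :=
  (∀ j : Fin m, ∑ i ∈ Finset.Iic j, sortDesc x i ≤ ∑ i ∈ Finset.Iic j, sortDesc y i) ∧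
    ∑ i, x i = ∑ i, y i

/-- Majorization of vectors of possibly different lengths, padding with zeros. -/
def MajorizedByPad {k m : ℕ} (x : Fin k → ℝ) (y : Fin m → ℝ) : Prop :=
  MajorizedBy (pad x (max k m)) (pad y (max k m))

/-- The frame operator `S_F = ∑ f_i f_i^*` of a finite sequence of vectors in `ℂ^d`. -/
noncomputable def frameOp {d n : ℕ} (F : Fin n → Fin d → ℂ) : Matrix (Fin d) (Fin d) ℂ :=
  ∑ l, Matrix.vecMulVec (F l) (star (F l))

/-- The squared norm `‖g‖²` of a vector in `ℂ^d`. -/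
noncomputable def normSqVec {d : ℕ} (g : Fin d → ℂ) : ℝ :=
  ∑ i, Complex.normSq (g i)

open scoped Classical in
/-- Eigenvalues of a (Hermitian) matrix arranged in decreasing order. -/
noncomputable def eigsDesc {d : ℕ} (S : Matrix (Fin d) (Fin d) ℂ) : Fin d → ℝ :=
  if h : S.IsHermitian then sortDesc h.eigenvalues else 0

open scoped Classical in
/-- Eigenvalues of a (Hermitian) matrix arranged in increasing order. -/
noncomputable def eigsAsc {d : ℕ} (S : Matrix (Fin d) (Fin d) ℂ) : Fin d → ℝ :=
  if h : S.IsHermitian then sortAsc h.eigenvalues else 0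

/-- `Γ_d(a)`: non-increasing nonnegative vectors in `ℝ^d` majorizing `a`. -/
def Gamma {k : ℕ} (d : ℕ) (a : Fin k → ℝ) : Set (Fin d → ℝ) :=
  {μ | Antitone μ ∧ (∀ i, 0 ≤ μ i) ∧ MajorizedByPad a μ}

/-- The convex potential `P_f = tr f(S) = ∑ f(λ_i(S))`. -/
noncomputable def potential {d : ℕ} (f : ℝ → ℝ) (S : Matrix (Fin d) (Fin d) ℂ) : ℝ :=
  ∑ i, f (eigsDesc S i)

/-- Final averages `Q_{j,r} = (1/(r-j)) (∑_{i=j+1}^k a_i + ∑_{i=j+1}^r λ_i)` (1-based). -/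
noncomputable def finalAvg {d k : ℕ} (lam : Fin d → ℝ) (a : Fin k → ℝ) (j r : ℕ) : ℝ :=
  ((∑ i : Fin k, if j ≤ (i : ℕ) then a i else 0) +
      (∑ i : Fin d, if j ≤ (i : ℕ) ∧ (i : ℕ) < r then lam i else 0)) / ((r : ℝ) - (j : ℝ))

/-- Initial averages: `initAvg lam a lo hi = P_{lo+1,hi}` (1-based), i.e. the average of
`h_i = λ_i + a_i` over the (0-based) index window `[lo, hi)`. -/
noncomputable def initAvg {d k : ℕ} (lam : Fin d → ℝ) (a : Fin k → ℝ) (lo hi : ℕ) : ℝ :=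
  ((∑ i : Fin d, if lo ≤ (i : ℕ) ∧ (i : ℕ) < hi then lam i else 0) +
      (∑ i : Fin k, if lo ≤ (i : ℕ) ∧ (i : ℕ) < hi then a i else 0)) / ((hi : ℝ) - (lo : ℝ))

/-- 1-based access to a vector indexed by `Fin d`. -/
noncomputable def get1 {d : ℕ} (lam : Fin d → ℝ) (i : ℕ) : ℝ :=
  if h : i - 1 < d then lam ⟨i - 1, h⟩ else 0

/-- The index `s` is feasible for the pair `(λ, a)`: the unique vector
`ν_s = (c·1_{r-s}, λ_{r+1},…,λ_d)` determined by the truncated data satisfies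
`a^s ≺ ν_s - λ^s`. -/
def FeasibleIdx {d k : ℕ} (lam : Fin d → ℝ) (a : Fin k → ℝ) (s : ℕ) : Prop :=
  ∃ r : ℕ, ∃ c : ℝ, s < r ∧ r ≤ d ∧ 0 < c ∧
    (∀ i : Fin d, s ≤ (i : ℕ) → (i : ℕ) < r → lam i ≤ c) ∧
    (∀ hrd : r < d, c ≤ lam ⟨r, hrd⟩) ∧
    ((r : ℝ) - (s : ℝ)) * c =
      (∑ i : Fin d, if s ≤ (i : ℕ) ∧ (i : ℕ) < r then lam i else 0) +
        (∑ i : Fin k, if s ≤ (i : ℕ) then a i else 0) ∧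
    MajorizedByPad (fun i : Fin (k - s) => a ⟨s + (i : ℕ), by have := i.isLt; omega⟩)
      (fun i : Fin (d - s) =>
        if s + (i : ℕ) < r then c - lam ⟨s + (i : ℕ), by have := i.isLt; omega⟩ else 0)

/-!
Every `g_l` is an eigenvector of `S₀ + S_G`, so `S₀` and `S_G` commute and become diagonal in a
common orthonormal basis, with diagonals `α` and `β`. No vector of `G` is supported on two
coordinates `m`, `n` at which `α + β` differs, so mixing these two coordinates by a real `2 × 2`
matrix with unit columns preserves all the norms; a suitable matrix keeps `S_G` diagonal and moves
an amount `e` from `β n` to `β m`. If `α m + β m + e < α n + β n`, this brings two eigenvalues of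
the completed sequence strictly closer together, which strict convexity of `f` forbids at a
minimizer.

With `e = β n - β m` (exchange of the two coordinates) this shows that `α` and `β` are oppositely
ordered, so that one ordering of the basis turns `α` into `λ` and `β` into `μ` at once. Letting
`e → 0` then shows that `λ + μ` is non-increasing on `{i | μ_i ≠ 0}`; the sets `K_j` are its level
sets there.
-/

open scoped Matrix

section General

theorem add_map_sub_lt_of_strictConvexOn {𝕜 : Type*} [Field 𝕜] [LinearOrder 𝕜]
    [IsStrictOrderedRing 𝕜] {s : Set 𝕜} {f : 𝕜 → 𝕜} (hf : StrictConvexOn 𝕜 s f) {x y e : 𝕜}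
    (hx : x ∈ s) (hy : y ∈ s) (he : 0 < e) (hey : x + e < y) :
    f (x + e) + f (y - e) < f x + f y := by
  have hxy : 0 < y - x := by linarith
  obtain ⟨t, rfl⟩ : ∃ t, e = t * (y - x) := ⟨e / (y - x), by field_simp⟩
  have ht : 0 < t := pos_of_mul_pos_left he hxy.le
  have ht' : 0 < 1 - t := pos_of_mul_pos_left (by linarith : 0 < (1 - t) * (y - x)) hxy.le
  have hleft := hf.2 hx hy (sub_pos.1 hxy).ne ht' ht (by ring)
  have hright := hf.2 hx hy (sub_pos.1 hxy).ne ht ht' (by ring)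
  simp only [smul_eq_mul] at hleft hright
  rw [show (1 - t) * x + t * y = x + t * (y - x) by ring] at hleft
  rw [show t * x + (1 - t) * y = y - t * (y - x) by ring] at hright
  linarith

theorem exists_equiv_monotone_antitone_of_antivary {ι R S : Type*} [Fintype ι] [LinearOrder R]
    [LinearOrder S] {n : ℕ} (hn : Fintype.card ι = n) {f : ι → R} {g : ι → S}
    (h : Antivary f g) : ∃ σ : Fin n ≃ ι, Monotone (f ∘ σ) ∧ Antitone (g ∘ σ) := by
  obtain ⟨_, hf, hg⟩ := h.exists_monotone_antitone
  let σ : Fin n ≃o ι := Fintype.orderIsoFinOfCardEq ι hn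
  exact ⟨σ.toEquiv, hf.comp σ.monotone, hg.comp_monotone σ.monotone⟩

theorem mul_eq_zero_of_diagonal_mulVec_eq_smul {ι R : Type*} [Fintype ι] [DecidableEq ι]
    [CommRing R] [IsDomain R] {r v : ι → R} {x : R} (h : Matrix.diagonal r *ᵥ v = x • v)
    {m n : ι} (hmn : r m ≠ r n) : v m * v n = 0 := by
  have hcoord (i : ι) : r i * v i = x * v i := by
    simpa [Matrix.mulVec_diagonal] using congrFun h i
  refine (mul_eq_zero.1 ?_).resolve_left (sub_ne_zero.2 hmn)
  linear_combination v n * hcoord m - v m * hcoord n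

theorem exists_orthonormalBasis_eigenvectors_of_commute {𝕜 E : Type*} [RCLike 𝕜]
    [NormedAddCommGroup E] [InnerProductSpace 𝕜 E] [FiniteDimensional 𝕜 E] {n : ℕ}
    (hn : Module.finrank 𝕜 E = n) {A B : E →ₗ[𝕜] E} (hA : A.IsSymmetric) (hB : B.IsSymmetric)
    (hAB : Commute A B) :
    ∃ (b : OrthonormalBasis (Fin n) 𝕜 E) (α β : Fin n → ℝ),
      ∀ i, A (b i) = (α i : 𝕜) • b i ∧ B (b i) = (β i : 𝕜) • b i := by
  classical
  have hint := LinearMap.IsSymmetric.directSum_isInternal_of_commute hA hB hAB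
  have hort := LinearMap.IsSymmetric.orthogonalFamily_eigenspace_inf_eigenspace hA hB
  have : Finite {χ : 𝕜 × 𝕜 // Module.End.eigenspace A χ.2 ⊓ Module.End.eigenspace B χ.1 ≠ ⊥} :=
    WellFoundedGT.finite_ne_bot_of_iSupIndep hint.submodule_iSupIndep
  have := Fintype.ofFinite {χ : 𝕜 × 𝕜 //
    Module.End.eigenspace A χ.2 ⊓ Module.End.eigenspace B χ.1 ≠ ⊥}
  have hint' := DirectSum.isInternal_ne_bot_iff.2 hint
  have hort' := hort.comp (Subtype.val_injective (p := fun χ =>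
    Module.End.eigenspace A χ.2 ⊓ Module.End.eigenspace B χ.1 ≠ ⊥))
  let b := hint'.subordinateOrthonormalBasis hn hort'
  have heig (i : Fin n) : ∃ x y : ℝ, A (b i) = (x : 𝕜) • b i ∧ B (b i) = (y : 𝕜) • b i := by
    obtain ⟨hAi, hBi⟩ := hint'.subordinateOrthonormalBasis_subordinate hn i hort'
    have hbi : b i ≠ 0 := b.orthonormal.ne_zero i
    obtain ⟨x, hx⟩ := RCLike.conj_eq_iff_real.1
      (hA.conj_eigenvalue_eq_self (Module.End.hasEigenvalue_of_hasEigenvector ⟨hAi, hbi⟩))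
    obtain ⟨y, hy⟩ := RCLike.conj_eq_iff_real.1
      (hB.conj_eigenvalue_eq_self (Module.End.hasEigenvalue_of_hasEigenvector ⟨hBi, hbi⟩))
    exact ⟨x, y, hx ▸ Module.End.mem_eigenspace_iff.1 hAi, hy ▸ Module.End.mem_eigenspace_iff.1 hBi⟩
  choose α β hαβ using heig
  exact ⟨b, α, β, hαβ⟩

theorem exists_unitary_conj_eq_diagonal_of_commute {𝕜 : Type*} [RCLike 𝕜] {n : ℕ}
    {A B : Matrix (Fin n) (Fin n) 𝕜} (hA : A.IsHermitian) (hB : B.IsHermitian)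
    (hAB : Commute A B) :
    ∃ U ∈ Matrix.unitaryGroup (Fin n) 𝕜, ∃ α β : Fin n → ℝ,
      U * A * star U = Matrix.diagonal (fun i => (α i : 𝕜)) ∧
      U * B * star U = Matrix.diagonal (fun i => (β i : 𝕜)) := by
  have hcomm : Commute (Matrix.toEuclideanLin A) (Matrix.toEuclideanLin B) :=
    LinearMap.ext fun v => by
      simp [Matrix.toLpLin_apply, Matrix.mulVec_mulVec, hAB.eq]
  obtain ⟨b, α, β, hb⟩ := exists_orthonormalBasis_eigenvectors_of_commute finrank_euclideanSpace_fin
    (Matrix.isSymmetric_toEuclideanLin_iff.2 hA) (Matrix.isSymmetric_toEuclideanLin_iff.2 hB) hcomm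
  let V : Matrix (Fin n) (Fin n) 𝕜 := (EuclideanSpace.basisFun (Fin n) 𝕜).toBasis.toMatrix b
  have hV : V ∈ Matrix.unitaryGroup (Fin n) 𝕜 :=
    (EuclideanSpace.basisFun (Fin n) 𝕜).toMatrix_orthonormalBasis_mem_unitary b
  have hdiag (M : Matrix (Fin n) (Fin n) 𝕜) (r : Fin n → ℝ)
      (h : ∀ i, Matrix.toEuclideanLin M (b i) = (r i : 𝕜) • b i) :
      star V * M * V = Matrix.diagonal (fun i => (r i : 𝕜)) := by
    have hMV : M * V = V * Matrix.diagonal (fun i => (r i : 𝕜)) := by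
      ext p i
      have hp := congrArg (fun v : EuclideanSpace 𝕜 (Fin n) => v p) (h i)
      rw [Matrix.mul_diagonal]
      simpa [V, Matrix.mul_apply, Matrix.mulVec, dotProduct, Matrix.toLpLin_apply,
        Module.Basis.toMatrix_apply, RCLike.real_smul_eq_coe_mul, mul_comm] using hp
    rw [mul_assoc, hMV, ← mul_assoc, Unitary.star_mul_self_of_mem hV, one_mul]
  refine ⟨star V, Unitary.star_mem hV, α, β, ?_, ?_⟩
  · rw [star_star, hdiag A α fun i => (hb i).1]
  · rw [star_star, hdiag B β fun i => (hb i).2]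

end General

section Eigenvalues

variable {d : ℕ}

theorem sortAsc_eq_comp {x : Fin d → ℝ} {σ : Equiv.Perm (Fin d)} (h : Monotone (x ∘ σ)) :
    sortAsc x = x ∘ σ :=
  (Tuple.comp_sort_eq_comp_iff_monotone.2 h).symm

theorem sortAsc_congr {x y : Fin d → ℝ} (h : univ.val.map x = univ.val.map y) :
    sortAsc x = sortAsc y := by
  rw [Fin.univ_val_map, Fin.univ_val_map, Multiset.coe_eq_coe] at h
  have hperm : (List.ofFn (sortAsc x)).Perm (List.ofFn (sortAsc y)) :=
    ((Equiv.Perm.ofFn_comp_perm _ x).trans h).trans (Equiv.Perm.ofFn_comp_perm _ y).symm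
  exact List.ofFn_injective (hperm.eq_of_sortedLE (Tuple.monotone_sort x).sortedLE_ofFn
    (Tuple.monotone_sort y).sortedLE_ofFn)

theorem antitone_sortDesc (x : Fin d → ℝ) : Antitone (sortDesc x) := fun _ _ hij =>
  Tuple.monotone_sort x (Fin.rev_le_rev.2 hij)

theorem sortDesc_eq_comp {x : Fin d → ℝ} {σ : Equiv.Perm (Fin d)} (h : Antitone (x ∘ σ)) :
    sortDesc x = x ∘ σ :=
  Tuple.unique_antitone (σ := Fin.revPerm.trans (Tuple.sort x)) (antitone_sortDesc x) h

theorem sortDesc_congr {x y : Fin d → ℝ} (h : univ.val.map x = univ.val.map y) :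
    sortDesc x = sortDesc y :=
  funext fun i => congrFun (sortAsc_congr h) i.rev

theorem sum_comp_sortDesc (f : ℝ → ℝ) (x : Fin d → ℝ) :
    ∑ i, f (sortDesc x i) = ∑ i, f (x i) :=
  Equiv.sum_comp (Fin.revPerm.trans (Tuple.sort x)) (fun i => f (x i))

theorem isHermitian_diagonal_ofReal (r : Fin d → ℝ) :
    (Matrix.diagonal fun i => (r i : ℂ)).IsHermitian :=
  Matrix.isHermitian_diagonal_iff.2 fun i => Complex.conj_ofReal (r i)

theorem map_eigenvalues_diagonal {r : Fin d → ℝ}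
    (h : (Matrix.diagonal fun i => (r i : ℂ)).IsHermitian) :
    univ.val.map h.eigenvalues = univ.val.map r := by
  have hroots := h.roots_charpoly_eq_eigenvalues
  rw [Matrix.charpoly_diagonal, Polynomial.roots_prod _ _
    (Finset.prod_ne_zero_iff.2 fun i _ => Polynomial.X_sub_C_ne_zero _)] at hroots
  simpa [Multiset.bind_singleton, Function.comp_def] using
    congrArg (Multiset.map Complex.re) hroots.symm

theorem eigsAsc_diagonal (r : Fin d → ℝ) :
    eigsAsc (Matrix.diagonal fun i => (r i : ℂ)) = sortAsc r := by
  have h := isHermitian_diagonal_ofReal r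
  rw [eigsAsc, dif_pos h, sortAsc_congr (map_eigenvalues_diagonal h)]

theorem eigsDesc_diagonal (r : Fin d → ℝ) :
    eigsDesc (Matrix.diagonal fun i => (r i : ℂ)) = sortDesc r := by
  have h := isHermitian_diagonal_ofReal r
  rw [eigsDesc, dif_pos h, sortDesc_congr (map_eigenvalues_diagonal h)]

theorem antitone_eigsDesc (S : Matrix (Fin d) (Fin d) ℂ) : Antitone (eigsDesc S) := by
  rw [eigsDesc]
  split_ifs
  exacts [antitone_sortDesc _, antitone_const]

theorem eigsDesc_nonneg {S : Matrix (Fin d) (Fin d) ℂ} (hS : S.PosSemidef) (i : Fin d) :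
    0 ≤ eigsDesc S i := by
  rw [eigsDesc, dif_pos hS.isHermitian]
  exact hS.eigenvalues_nonneg _

theorem isLowerSet_eigsDesc_ne_zero {S : Matrix (Fin d) (Fin d) ℂ} (hS : S.PosSemidef) :
    IsLowerSet {i | eigsDesc S i ≠ 0} := fun _ _ hji hi =>
  (((eigsDesc_nonneg hS _).lt_of_ne' hi).trans_le (antitone_eigsDesc S hji)).ne'

theorem potential_diagonal (f : ℝ → ℝ) (r : Fin d → ℝ) :
    potential f (Matrix.diagonal fun i => (r i : ℂ)) = ∑ i, f (r i) := by
  rw [potential, eigsDesc_diagonal, sum_comp_sortDesc]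

variable {S U : Matrix (Fin d) (Fin d) ℂ}

theorem isHermitian_conj (hS : S.IsHermitian) (U : Matrix (Fin d) (Fin d) ℂ) :
    (U * S * star U).IsHermitian :=
  Matrix.isHermitian_mul_mul_conjTranspose U hS

theorem eigenvalues_unitary_conj (hU : U ∈ Matrix.unitaryGroup (Fin d) ℂ) (hS : S.IsHermitian)
    (hUS : (U * S * star U).IsHermitian) : hUS.eigenvalues = hS.eigenvalues := by
  rw [Matrix.IsHermitian.eigenvalues_eq_eigenvalues_iff, Matrix.charpoly_mul_comm, ← mul_assoc,
    Unitary.star_mul_self_of_mem hU, one_mul]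

theorem eigsAsc_unitary_conj (hU : U ∈ Matrix.unitaryGroup (Fin d) ℂ) (hS : S.IsHermitian) :
    eigsAsc (U * S * star U) = eigsAsc S := by
  rw [eigsAsc, eigsAsc, dif_pos hS, dif_pos (isHermitian_conj hS U), eigenvalues_unitary_conj hU hS]

theorem eigsDesc_unitary_conj (hU : U ∈ Matrix.unitaryGroup (Fin d) ℂ) (hS : S.IsHermitian) :
    eigsDesc (U * S * star U) = eigsDesc S := by
  rw [eigsDesc, eigsDesc, dif_pos hS, dif_pos (isHermitian_conj hS U),
    eigenvalues_unitary_conj hU hS]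

theorem potential_unitary_conj (f : ℝ → ℝ) (hU : U ∈ Matrix.unitaryGroup (Fin d) ℂ)
    (hS : S.IsHermitian) : potential f (U * S * star U) = potential f S := by
  rw [potential, eigsDesc_unitary_conj hU hS, potential]

theorem nonneg_of_conj_eq_diagonal (hS : S.PosSemidef) {r : Fin d → ℝ}
    (h : U * S * star U = Matrix.diagonal fun i => (r i : ℂ)) (i : Fin d) : 0 ≤ r i := by
  have hpsd := hS.mul_mul_conjTranspose_same U
  rw [← Matrix.star_eq_conjTranspose, h, Matrix.posSemidef_diagonal_iff] at hpsd
  exact Complex.zero_le_real.1 (hpsd i)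

end Eigenvalues

section FrameOperator

variable {d k : ℕ}

theorem frameOp_apply (G : Fin k → Fin d → ℂ) (p q : Fin d) :
    frameOp G p q = ∑ l, G l p * star (G l q) := by
  simp [frameOp, Matrix.sum_apply, Matrix.vecMulVec_apply]

theorem posSemidef_frameOp (G : Fin k → Fin d → ℂ) : (frameOp G).PosSemidef :=
  Matrix.posSemidef_sum _ fun l _ => Matrix.posSemidef_vecMulVec_self_star (G l)

theorem frameOp_mulVec (U : Matrix (Fin d) (Fin d) ℂ) (G : Fin k → Fin d → ℂ) :
    frameOp (fun l => U *ᵥ G l) = U * frameOp G * star U := by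
  simp only [frameOp, Matrix.mul_sum, Matrix.sum_mul, Matrix.mul_vecMulVec, Matrix.vecMulVec_mul,
    Matrix.star_mulVec, Matrix.star_eq_conjTranspose]

theorem commute_frameOp {S : Matrix (Fin d) (Fin d) ℂ} (hS : S.IsHermitian)
    {G : Fin k → Fin d → ℂ} (hG : ∀ l, ∃ x : ℝ, S *ᵥ G l = (x : ℂ) • G l) :
    Commute S (frameOp G) := by
  refine Commute.sum_right _ _ _ fun l _ => ?_
  obtain ⟨x, hx⟩ := hG l
  have hx' : star (G l) ᵥ* S = (x : ℂ) • star (G l) := by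
    simpa [Matrix.star_mulVec, hS.eq] using congrArg star hx
  rw [Commute, SemiconjBy, Matrix.mul_vecMulVec, Matrix.vecMulVec_mul, hx, hx',
    Matrix.smul_vecMulVec, Matrix.vecMulVec_smul]

theorem ofReal_normSqVec (v : Fin d → ℂ) : (normSqVec v : ℂ) = star v ⬝ᵥ v := by
  simp [normSqVec, dotProduct, Complex.normSq_eq_conj_mul_self]

theorem normSqVec_unitary_mulVec {U : Matrix (Fin d) (Fin d) ℂ}
    (hU : U ∈ Matrix.unitaryGroup (Fin d) ℂ) (v : Fin d → ℂ) :
    normSqVec (U *ᵥ v) = normSqVec v := by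
  apply Complex.ofReal_injective
  rw [ofReal_normSqVec, ofReal_normSqVec, Matrix.star_mulVec, ← Matrix.dotProduct_mulVec,
    Matrix.mulVec_mulVec, ← Matrix.star_eq_conjTranspose, Unitary.star_mul_self_of_mem hU,
    Matrix.one_mulVec]

end FrameOperator

section Transfer

/-- A real `2 × 2` matrix `T` with unit columns for which `T * diag(b₁, b₂) * Tᵀ` is
`diag(b₁ + e, b₂ - e)`. Applied to two coordinates, it moves the amount `e` from one eigenvalue of a
diagonal frame operator to another. -/
structure IsTransfer (T : Matrix (Fin 2) (Fin 2) ℝ) (b₁ b₂ e : ℝ) : Prop where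
  col_zero : T 0 0 ^ 2 + T 1 0 ^ 2 = 1
  col_one : T 0 1 ^ 2 + T 1 1 ^ 2 = 1
  diag_zero : T 0 0 ^ 2 * b₁ + T 0 1 ^ 2 * b₂ = b₁ + e
  diag_one : T 1 0 ^ 2 * b₁ + T 1 1 ^ 2 * b₂ = b₂ - e
  offDiag : T 0 0 * T 1 0 * b₁ + T 0 1 * T 1 1 * b₂ = 0

theorem isTransfer_swap (b₁ b₂ : ℝ) : IsTransfer !![0, 1; 1, 0] b₁ b₂ (b₂ - b₁) := by
  constructor <;> simp

theorem exists_sq_add_sq_eq_one_of_mem_Icc {x y z : ℝ} (hz : z ∈ Set.Icc x y) :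
    ∃ c s : ℝ, c ^ 2 + s ^ 2 = 1 ∧ c ^ 2 * x + s ^ 2 * y = z := by
  obtain ⟨t, u, ht, hu, htu, rfl⟩ := (Convex.mem_Icc (hz.1.trans hz.2)).1 hz
  exact ⟨√t, √u, by rw [Real.sq_sqrt ht, Real.sq_sqrt hu, htu],
    by rw [Real.sq_sqrt ht, Real.sq_sqrt hu]⟩

theorem exists_isTransfer {b₁ b₂ e : ℝ} (hb₂ : 0 < b₂) (hb : b₂ ≤ b₁) (he : 0 ≤ e)
    (heb : e ≤ b₂) : ∃ T, IsTransfer T b₁ b₂ e := by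
  obtain ⟨c, s, hcs, hb₁⟩ := exists_sq_add_sq_eq_one_of_mem_Icc
    (show b₁ ∈ Set.Icc (b₂ - e) (b₁ + e) by constructor <;> linarith)
  obtain ⟨X, hX, rfl⟩ : ∃ X, 0 < X ∧ X ^ 2 = b₁ :=
    ⟨√b₁, Real.sqrt_pos.2 (hb₂.trans_le hb), Real.sq_sqrt (hb₂.trans_le hb).le⟩
  obtain ⟨Y, hY, rfl⟩ : ∃ Y, 0 < Y ∧ Y ^ 2 = b₂ := ⟨√b₂, Real.sqrt_pos.2 hb₂, Real.sq_sqrt hb₂.le⟩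
  obtain ⟨P, hP⟩ : ∃ P, P ^ 2 = X ^ 2 + e := ⟨_, Real.sq_sqrt (by positivity)⟩
  obtain ⟨Q, hQ⟩ : ∃ Q, Q ^ 2 = Y ^ 2 - e := ⟨_, Real.sq_sqrt (sub_nonneg.2 heb)⟩
  -- `T = diag(P, Q) * !![s, c; -c, s] * diag(X, Y)⁻¹` carries `diag(X², Y²)` to `diag(P², Q²)` for
  -- every rotation `(c, s)`; the one chosen gives `T` unit columns.
  refine ⟨!![P * s / X, P * c / Y; -(Q * c / X), Q * s / Y], ?_, ?_, ?_, ?_, ?_⟩ <;>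
    simp only [Matrix.of_apply, Matrix.cons_val_zero, Matrix.cons_val_one, Matrix.cons_val'] <;>
    field_simp
  · linear_combination s ^ 2 * hP + c ^ 2 * hQ + hb₁
  · linear_combination c ^ 2 * hP + s ^ 2 * hQ - hb₁ + (X ^ 2 + Y ^ 2) * hcs
  · linear_combination P ^ 2 * hcs + hP
  · linear_combination Q ^ 2 * hcs + hQ
  · ring

end Transfer

section Mix

variable {ι κ : Type*} [DecidableEq ι] {m n : ι} {T : Matrix (Fin 2) (Fin 2) ℝ} {b₁ b₂ e : ℝ}

/-- The family obtained from `v` by applying the real `2 × 2` matrix `T` to the entries `m` and `n`.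
It is used both on a vector `ι → ℂ` and on the family of rows of a matrix. -/
def mixCoords {M : Type*} [AddCommMonoid M] [Module ℝ M] (T : Matrix (Fin 2) (Fin 2) ℝ) (m n : ι)
    (v : ι → M) : ι → M :=
  Function.update (Function.update v m (T 0 0 • v m + T 0 1 • v n)) n (T 1 0 • v m + T 1 1 • v n)

/-- The vector obtained from `β` by moving the amount `e` from coordinate `n` to coordinate `m`. -/
def transferCoords (m n : ι) (e : ℝ) (β : ι → ℝ) : ι → ℝ :=
  Function.update (Function.update β m (β m + e)) n (β n - e)

theorem mixCoords_apply_apply {M : Type*} [AddCommMonoid M] [Module ℝ M] (v : ι → κ → M) (i : ι)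
    (l : κ) : mixCoords T m n v i l = mixCoords T m n (fun i => v i l) i := by
  rcases eq_or_ne i n with rfl | hin
  · simp [mixCoords]
  rcases eq_or_ne i m with rfl | him
  · simp [mixCoords, hin]
  · simp [mixCoords, hin, him]

theorem normSq_add_of_mul_eq_zero (x y : ℝ) {z w : ℂ} (h : z * w = 0) :
    Complex.normSq (x • z + y • w) = x ^ 2 * Complex.normSq z + y ^ 2 * Complex.normSq w := by
  rcases mul_eq_zero.1 h with rfl | rfl <;> simp [sq]

theorem normSqVec_mixCoords {d : ℕ} {m n : Fin d} (hmn : m ≠ n) (hT : IsTransfer T b₁ b₂ e)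
    {v : Fin d → ℂ} (hv : v m * v n = 0) : normSqVec (mixCoords T m n v) = normSqVec v := by
  rw [← sub_eq_zero, normSqVec, normSqVec, ← Finset.sum_sub_distrib,
    Fintype.sum_eq_add m n hmn fun p hp => by simp [mixCoords, hp.1, hp.2]]
  simp only [mixCoords, Function.update_self, Function.update_of_ne hmn,
    normSq_add_of_mul_eq_zero _ _ hv]
  linear_combination Complex.normSq (v m) * hT.col_zero + Complex.normSq (v n) * hT.col_one

theorem mixCoords_dotProduct_star_mixCoords [Fintype κ] (hmn : m ≠ n) {β : ι → ℝ}
    (hT : IsTransfer T (β m) (β n) e) {r : ι → κ → ℂ}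
    (hr : ∀ p q, r p ⬝ᵥ star (r q) = if p = q then (β p : ℂ) else 0) (p q : ι) :
    mixCoords T m n r p ⬝ᵥ star (mixCoords T m n r q) =
      if p = q then (transferCoords m n e β p : ℂ) else 0 := by
  have hdiag₀ : (T 0 0 * (T 0 0 * β m) + T 0 1 * (T 0 1 * β n) : ℂ) = β m + e :=
    mod_cast by linear_combination hT.diag_zero
  have hdiag₁ : (T 1 0 * (T 1 0 * β m) + T 1 1 * (T 1 1 * β n) : ℂ) = β n - e :=
    mod_cast by linear_combination hT.diag_one
  have hoff₀₁ : (T 0 0 * (T 1 0 * β m) + T 0 1 * (T 1 1 * β n) : ℂ) = 0 :=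
    mod_cast by linear_combination hT.offDiag
  have hoff₁₀ : (T 1 0 * (T 0 0 * β m) + T 1 1 * (T 0 1 * β n) : ℂ) = 0 :=
    mod_cast by linear_combination hT.offDiag
  have htri (i : ι) : i = m ∨ i = n ∨ i ≠ m ∧ i ≠ n := by tauto
  rcases htri p with hp | hp | ⟨hpm, hpn⟩ <;> rcases htri q with hq | hq | ⟨hqm, hqn⟩ <;>
    simp [mixCoords, transferCoords, *, Ne.symm]

theorem frameOp_mixCoords {d k : ℕ} {m n : Fin d} (hmn : m ≠ n) {β : Fin d → ℝ}
    (hT : IsTransfer T (β m) (β n) e) {G : Fin k → Fin d → ℂ}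
    (hG : frameOp G = Matrix.diagonal fun i => (β i : ℂ)) :
    frameOp (fun l => mixCoords T m n (G l)) =
      Matrix.diagonal fun i => (transferCoords m n e β i : ℂ) := by
  have hgram (H : Fin k → Fin d → ℂ) (p q : Fin d) :
      frameOp H p q = (fun l => H l p) ⬝ᵥ star (fun l => H l q) := frameOp_apply H p q
  ext p q
  rw [hgram, Matrix.diagonal_apply, ← mixCoords_dotProduct_star_mixCoords hmn hT
    (r := fun i l => G l i) fun i j => by rw [← hgram, hG, Matrix.diagonal_apply]]
  congr 2 <;> ext l <;> rw [mixCoords_apply_apply]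

end Mix

section Minimal

variable {d k : ℕ} {f : ℝ → ℝ}

/-- `G` completes a sequence with frame operator `S₀` optimally for the potential `f`, among all
sequences whose vectors have the same norms as those of `G`. -/
def IsMinimalCompletion (f : ℝ → ℝ) (S₀ : Matrix (Fin d) (Fin d) ℂ) (G : Fin k → Fin d → ℂ) :
    Prop :=
  ∀ G' : Fin k → Fin d → ℂ, (∀ l, normSqVec (G' l) = normSqVec (G l)) →
    potential f (S₀ + frameOp G) ≤ potential f (S₀ + frameOp G')

namespace IsMinimalCompletion

theorem unitary_conj {S₀ U : Matrix (Fin d) (Fin d) ℂ} {G : Fin k → Fin d → ℂ}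
    (hmin : IsMinimalCompletion f S₀ G) (hS₀ : S₀.IsHermitian)
    (hU : U ∈ Matrix.unitaryGroup (Fin d) ℂ) :
    IsMinimalCompletion f (U * S₀ * star U) (fun l => U *ᵥ G l) := fun G' hG' => by
  have hconj (H : Fin k → Fin d → ℂ) :
      potential f (U * S₀ * star U + frameOp (fun l => U *ᵥ H l)) =
        potential f (S₀ + frameOp H) := by
    rw [frameOp_mulVec, ← add_mul, ← mul_add,
      potential_unitary_conj f hU (hS₀.add (posSemidef_frameOp H).isHermitian)]
  have hG'_eq : G' = fun l => U *ᵥ (star U *ᵥ G' l) := funext fun l => by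
    rw [Matrix.mulVec_mulVec, Unitary.mul_star_self_of_mem hU, Matrix.one_mulVec]
  rw [hconj, hG'_eq, hconj]
  refine hmin _ fun l => ?_
  rw [normSqVec_unitary_mulVec (Unitary.star_mem hU), hG', normSqVec_unitary_mulVec hU]

section Diagonal

variable {α β : Fin d → ℝ} {G : Fin k → Fin d → ℂ}

theorem sum_le_sum_transferCoords {T : Matrix (Fin 2) (Fin 2) ℝ} {m n : Fin d} {e : ℝ}
    (hmin : IsMinimalCompletion f (Matrix.diagonal fun i => (α i : ℂ)) G)
    (hβ : frameOp G = Matrix.diagonal fun i => (β i : ℂ)) (hmn : m ≠ n)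
    (hT : IsTransfer T (β m) (β n) e) (hG : ∀ l, G l m * G l n = 0) :
    ∑ i, f (α i + β i) ≤ ∑ i, f (α i + transferCoords m n e β i) := by
  have hle := hmin (fun l => mixCoords T m n (G l)) fun l => normSqVec_mixCoords hmn hT (hG l)
  rw [hβ, frameOp_mixCoords hmn hT hβ, Matrix.diagonal_add, Matrix.diagonal_add] at hle
  simpa only [← Complex.ofReal_add, potential_diagonal] using hle

theorem add_le_add_add_of_isTransfer {T : Matrix (Fin 2) (Fin 2) ℝ} {m n : Fin d} {e : ℝ}
    (hmin : IsMinimalCompletion f (Matrix.diagonal fun i => (α i : ℂ)) G)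
    (hf : StrictConvexOn ℝ (Set.Ici 0) f)
    (hβ : frameOp G = Matrix.diagonal fun i => (β i : ℂ)) (hnonneg : ∀ i, 0 ≤ α i + β i)
    (hG : ∀ l, ∃ x : ℝ, (Matrix.diagonal fun i => ((α i + β i : ℝ) : ℂ)) *ᵥ G l = (x : ℂ) • G l)
    (hT : IsTransfer T (β m) (β n) e) (he : 0 < e) : α n + β n ≤ α m + β m + e := by
  by_contra! hlt
  have hmn : m ≠ n := by rintro rfl; linarith
  have hsupp (l : Fin k) : G l m * G l n = 0 := by
    obtain ⟨x, hx⟩ := hG l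
    exact mul_eq_zero_of_diagonal_mulVec_eq_smul hx
      (Complex.ofReal_injective.ne (by linarith : α m + β m < α n + β n).ne)
  have hle := hmin.sum_le_sum_transferCoords hβ hmn hT hsupp
  rw [← sub_nonneg, ← Finset.sum_sub_distrib, Fintype.sum_eq_add m n hmn fun i hi => by
    simp [transferCoords, hi.1, hi.2]] at hle
  simp only [transferCoords, Function.update_self, Function.update_of_ne hmn, ← add_assoc,
    ← add_sub_assoc] at hle
  linarith [add_map_sub_lt_of_strictConvexOn hf (hnonneg m) (hnonneg n) he hlt]

theorem antivary_of_diagonal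
    (hmin : IsMinimalCompletion f (Matrix.diagonal fun i => (α i : ℂ)) G)
    (hf : StrictConvexOn ℝ (Set.Ici 0) f)
    (hβ : frameOp G = Matrix.diagonal fun i => (β i : ℂ)) (hnonneg : ∀ i, 0 ≤ α i + β i)
    (hG : ∀ l, ∃ x : ℝ, (Matrix.diagonal fun i => ((α i + β i : ℝ) : ℂ)) *ᵥ G l = (x : ℂ) • G l) :
    Antivary α β := fun m n hmn => by
  linarith [hmin.add_le_add_add_of_isTransfer hf hβ hnonneg hG (isTransfer_swap (β m) (β n))
    (sub_pos.2 hmn)]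

theorem add_le_add_of_diagonal {m n : Fin d}
    (hmin : IsMinimalCompletion f (Matrix.diagonal fun i => (α i : ℂ)) G)
    (hf : StrictConvexOn ℝ (Set.Ici 0) f)
    (hβ : frameOp G = Matrix.diagonal fun i => (β i : ℂ)) (hnonneg : ∀ i, 0 ≤ α i + β i)
    (hG : ∀ l, ∃ x : ℝ, (Matrix.diagonal fun i => ((α i + β i : ℝ) : ℂ)) *ᵥ G l = (x : ℂ) • G l)
    (hn : 0 < β n) (hnm : β n ≤ β m) : α n + β n ≤ α m + β m := by
  refine le_of_forall_pos_le_add fun e he => ?_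
  obtain ⟨T, hT⟩ := exists_isTransfer hn hnm (le_min hn.le he.le) (min_le_left _ e)
  exact (hmin.add_le_add_add_of_isTransfer hf hβ hnonneg hG hT (lt_min hn he)).trans
    (by gcongr; exact min_le_right _ _)

theorem antitoneOn_sortAsc_add_sortDesc
    (hmin : IsMinimalCompletion f (Matrix.diagonal fun i => (α i : ℂ)) G)
    (hf : StrictConvexOn ℝ (Set.Ici 0) f)
    (hβ : frameOp G = Matrix.diagonal fun i => (β i : ℂ)) (hα_nonneg : ∀ i, 0 ≤ α i)
    (hβ_nonneg : ∀ i, 0 ≤ β i)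
    (hG : ∀ l, ∃ x : ℝ, (Matrix.diagonal fun i => ((α i + β i : ℝ) : ℂ)) *ᵥ G l = (x : ℂ) • G l) :
    AntitoneOn (fun i => sortAsc α i + sortDesc β i) {i | sortDesc β i ≠ 0} := by
  have hnonneg (i : Fin d) : 0 ≤ α i + β i := add_nonneg (hα_nonneg i) (hβ_nonneg i)
  obtain ⟨σ, hασ, hβσ⟩ := exists_equiv_monotone_antitone_of_antivary (Fintype.card_fin d)
    (hmin.antivary_of_diagonal hf hβ hnonneg hG)
  rw [sortAsc_eq_comp hασ, sortDesc_eq_comp hβσ]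
  exact fun i _ j hj hij => hmin.add_le_add_of_diagonal hf hβ hnonneg hG
    ((hβ_nonneg _).lt_of_ne' hj) (hβσ hij)

end Diagonal

theorem antitoneOn_eigsAsc_add_eigsDesc {S₀ : Matrix (Fin d) (Fin d) ℂ} {G : Fin k → Fin d → ℂ}
    (hmin : IsMinimalCompletion f S₀ G) (hS₀ : S₀.PosSemidef)
    (hf : StrictConvexOn ℝ (Set.Ici 0) f)
    (hG : ∀ l, ∃ x : ℝ, (S₀ + frameOp G) *ᵥ G l = (x : ℂ) • G l) :
    AntitoneOn (fun i => eigsAsc S₀ i + eigsDesc (frameOp G) i)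
      {i | eigsDesc (frameOp G) i ≠ 0} := by
  have hpsd := posSemidef_frameOp G
  have hcomm : Commute S₀ (frameOp G) := by
    simpa using (commute_frameOp (hS₀.isHermitian.add hpsd.isHermitian) hG).sub_left
      (Commute.refl (frameOp G))
  obtain ⟨U, hU, α, β, (hα : _ = Matrix.diagonal fun i => (α i : ℂ)),
      (hβ : _ = Matrix.diagonal fun i => (β i : ℂ))⟩ :=
    exists_unitary_conj_eq_diagonal_of_commute hS₀.isHermitian hpsd.isHermitian hcomm
  rw [← eigsAsc_unitary_conj hU hS₀.isHermitian, ← eigsDesc_unitary_conj hU hpsd.isHermitian,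
    hα, hβ, eigsAsc_diagonal, eigsDesc_diagonal]
  have hminU := hmin.unitary_conj hS₀.isHermitian hU
  rw [hα] at hminU
  refine hminU.antitoneOn_sortAsc_add_sortDesc hf (by rw [frameOp_mulVec, hβ])
    (nonneg_of_conj_eq_diagonal hS₀ hα) (nonneg_of_conj_eq_diagonal hpsd hβ) fun l => ?_
  obtain ⟨x, hx⟩ := hG l
  refine ⟨x, ?_⟩
  simp only [Complex.ofReal_add]
  rw [← Matrix.diagonal_add, ← hα, ← hβ, ← add_mul, ← mul_add, Matrix.mulVec_mulVec, mul_assoc,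
    Unitary.star_mul_self_of_mem hU, mul_one, ← Matrix.mulVec_mulVec, hx, Matrix.mulVec_smul]

end IsMinimalCompletion

/-- The set of indices `i` with `μ_i ≠ 0` and `λ_i + μ_i = y`, where `λ` and `μ` are the increasing
eigenvalues of `S₀` and the decreasing eigenvalues of `S`. For `y = c_j` this is the paper's `K_j`,
the condition `μ_i ≠ 0` standing for `i ≤ s_F`. -/
def eigenBlock (S₀ S : Matrix (Fin d) (Fin d) ℂ) (y : ℝ) : Set (Fin d) :=
  {i | eigsDesc S i ≠ 0 ∧ eigsAsc S₀ i + eigsDesc S i = y}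

end Minimal

theorem stmt_16_general {d k : ℕ} {f : ℝ → ℝ} {S₀ : Matrix (Fin d) (Fin d) ℂ}
    {G : Fin k → Fin d → ℂ} (hS₀ : S₀.PosSemidef) (hf : StrictConvexOn ℝ (Set.Ici 0) f)
    (hmin : IsMinimalCompletion f S₀ G)
    (hG : ∀ l, ∃ x : ℝ, (S₀ + frameOp G) *ᵥ G l = (x : ℂ) • G l) :
    (∀ y, (eigenBlock S₀ (frameOp G) y).OrdConnected) ∧
      ∀ y y', y' < y → ∀ i ∈ eigenBlock S₀ (frameOp G) y, ∀ j ∈ eigenBlock S₀ (frameOp G) y',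
        i < j := by
  have hanti := hmin.antitoneOn_eigsAsc_add_eigsDesc hS₀ hf hG
  refine ⟨fun y => ?_, fun y y' hy i hi j hj => ?_⟩
  · obtain ⟨u, hu, hblock⟩ := (Set.ordConnected_singleton (a := y)).preimage_antitoneOn hanti
    exact (show eigenBlock S₀ (frameOp G) y = _ ∩ u from hblock) ▸
      (isLowerSet_eigsDesc_ne_zero (posSemidef_frameOp G)).ordConnected.inter hu
  · exact hanti.reflect_lt hj.1 hi.1 (by simpa only [hi.2, hj.2] using hy)

theorem stmt_16 {d n₀ k : ℕ} (hdk : d ≤ k)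
    (F₀ : Fin n₀ → Fin d → ℂ) (a : Fin k → ℝ)
    (ha_pos : ∀ i, 0 < a i) (ha_mono : Antitone a)
    (f : ℝ → ℝ) (hf : StrictConvexOn ℝ (Set.Ici 0) f) (hf0 : ∀ x ∈ Set.Ici (0 : ℝ), 0 ≤ f x)
    (G : Fin k → Fin d → ℂ) (hG : ∀ i, normSqVec (G i) = a i)
    (hmin : ∀ G' : Fin k → Fin d → ℂ, (∀ i, normSqVec (G' i) = a i) →
      potential f (frameOp F₀ + frameOp G) ≤ potential f (frameOp F₀ + frameOp G'))
    (lam μ : Fin d → ℝ) (hlam : lam = eigsAsc (frameOp F₀)) (hμ : μ = eigsDesc (frameOp G))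
    (sF : ℕ) (hsF : sF = (frameOp G).rank)
    (hsmu : ∀ i : Fin d, μ i ≠ 0 ↔ (i : ℕ) < sF)
    (hop : eigsDesc (frameOp F₀ + frameOp G) = sortDesc (fun i => lam i + μ i))
    (p : ℕ) (hp1 : 1 < p) (c : Fin p → ℝ) (hcanti : StrictAnti c) (hcpos : ∀ j, 0 < c j)
    (hKcover : ∀ i : Fin d, (i : ℕ) < sF → ∃ j : Fin p, lam i + μ i = c j)
    (hKattain : ∀ j : Fin p, ∃ i : Fin d, (i : ℕ) < sF ∧ lam i + μ i = c j)
    (hJcover : ∀ l : Fin k, ∃ j : Fin p,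
      (frameOp F₀ + frameOp G).mulVec (G l) = (c j : ℂ) • G l) :
    (∀ i j : Fin d, (i : ℕ) < sF → (j : ℕ) < sF →
      lam i + μ i = c ⟨0, by omega⟩ →
      (∃ r : Fin p, 0 < (r : ℕ) ∧ lam j + μ j = c r) → i < j) ∧
    (∀ r : Fin p, ∀ i₁ i₂ i₃ : Fin d, i₁ ≤ i₂ → i₂ ≤ i₃ →
      (i₁ : ℕ) < sF → (i₃ : ℕ) < sF → lam i₁ + μ i₁ = c r → lam i₃ + μ i₃ = c r →
      ((i₂ : ℕ) < sF ∧ lam i₂ + μ i₂ = c r)) ∧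
    (∀ r r' : Fin p, r < r' → ∀ i j : Fin d, (i : ℕ) < sF → (j : ℕ) < sF →
      lam i + μ i = c r → lam j + μ j = c r' → i < j) := by
  subst hlam hμ
  simp only [← hsmu]
  obtain ⟨hconn, hlt⟩ := stmt_16_general (posSemidef_frameOp F₀) hf
    (fun G' h => hmin G' fun l => (h l).trans (hG l)) fun l => (hJcover l).imp' c fun _ h => h
  exact ⟨fun i j hi hj hic ⟨r, hr, hjc⟩ => hlt _ _ (hcanti hr) i ⟨hi, hic⟩ j ⟨hj, hjc⟩,
    fun r i₁ i₂ i₃ h₁₂ h₂₃ h₁ h₃ hc₁ hc₃ => (hconn (c r)).out ⟨h₁, hc₁⟩ ⟨h₃, hc₃⟩ ⟨h₁₂, h₂₃⟩,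
    fun r r' hr i j hi hj hic hjc => hlt _ _ (hcanti hr) i ⟨hi, hic⟩ j ⟨hj, hjc⟩⟩
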